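/- arXiv:1404.6238 — 12 statements merged into one kernel-verified Lean document; each statement's English description precedes it below -/
import Mathlib

section
/- Monotonicity of the operator 𝒜: if g and h are nondecreasing functions from [0,1] to [0,1] with g(x) ≤ h(x) for all x ∈ [0,1], then 𝒜g(x) ≤ 𝒜h(x) for all x ∈ [0,1]. -/
/-! Write `a = g ((x+1)/2)`, `b = g (x/2)`, and `A ≥ a`, `B ≥ b` for the values of `h`. The value
of `𝒜` is `((x+2) a² + (x+1) b (1 - a)) / 3`. It does not decrease when `a` is raised to `A` with `b`
fixed, because `b ≤ a`, nor when `b` is then raised to `B` with `A` fixed, because `A ≤ 1`. -/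

/-- The operator 𝒜 from the frog model recursion:
`𝒜g(x) = ((x+2)/3)·g((x+1)/2)² + ((x+1)/3)·g(x/2)·(1 − g((x+1)/2))`. -/
noncomputable def frogA (g : ℝ → ℝ) (x : ℝ) : ℝ :=
  ((x + 2) / 3) * (g ((x + 1) / 2)) ^ 2 +
    ((x + 1) / 3) * g (x / 2) * (1 - g ((x + 1) / 2))

/-- Monotonicity of 𝒜: if `g` and `h` are nondecreasing functions from `[0,1]` to `[0,1]`
with `g ≤ h` pointwise on `[0,1]`, then `𝒜g ≤ 𝒜h` pointwise on `[0,1]`. -/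
theorem frogA_mono (g h : ℝ → ℝ)
    (hgmono : MonotoneOn g (Set.Icc 0 1))
    (hgmem : ∀ x ∈ Set.Icc (0:ℝ) 1, g x ∈ Set.Icc (0:ℝ) 1)
    (hhmono : MonotoneOn h (Set.Icc 0 1))
    (hhmem : ∀ x ∈ Set.Icc (0:ℝ) 1, h x ∈ Set.Icc (0:ℝ) 1)
    (hgh : ∀ x ∈ Set.Icc (0:ℝ) 1, g x ≤ h x) :
    ∀ x ∈ Set.Icc (0:ℝ) 1, frogA g x ≤ frogA h x := by
  intro x ⟨hx0, hx1⟩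
  have hm1 : x / 2 ∈ Set.Icc (0:ℝ) 1 := ⟨by linarith, by linarith⟩
  have hm2 : (x + 1) / 2 ∈ Set.Icc (0:ℝ) 1 := ⟨by linarith, by linarith⟩
  have hba : g (x / 2) ≤ g ((x + 1) / 2) := hgmono hm1 hm2 (by linarith)
  have hb0 := (hgmem _ hm1).1
  have hA1 := (hhmem _ hm2).2
  have hbB := hgh _ hm1
  have haA := hgh _ hm2
  unfold frogA
  generalize g (x / 2) = b at *
  generalize g ((x + 1) / 2) = a at *
  generalize h (x / 2) = B at *
  generalize h ((x + 1) / 2) = A at *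
  -- Raising `a` to `A` with `b` fixed changes three times the value by `(A - a)` times this factor;
  -- its nonnegativity is where `b ≤ a`, the monotonicity of `g`, is needed.
  have hfac : 0 ≤ (x + 2) * (A + a) - (x + 1) * b := by
    nlinarith [mul_nonneg (by linarith : (0:ℝ) ≤ x + 1) (sub_nonneg.2 hba),
      mul_nonneg (by linarith : (0:ℝ) ≤ x + 2) (by linarith : (0:ℝ) ≤ A)]
  have h1 := mul_nonneg (sub_nonneg.2 haA) hfac
  -- Raising `b` to `B` with `A` fixed.
  have h2 := mul_nonneg (mul_nonneg (by linarith : (0:ℝ) ≤ x + 1) (sub_nonneg.2 hbB))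
    (sub_nonneg.2 hA1)
  linarith
end

section
/- The operator 𝒜 maps 𝒮 into itself: if g : [0,1] → [0,1] is nondecreasing, then 𝒜g takes values in [0,1] and is nondecreasing on [0,1]. -/
/-- 𝒜 maps the set 𝒮 of nondecreasing functions `[0,1] → [0,1]` into itself. -/
theorem frogA_maps_S_to_S (g : ℝ → ℝ)
    (hgmono : MonotoneOn g (Set.Icc 0 1))
    (hgmem : ∀ x ∈ Set.Icc (0:ℝ) 1, g x ∈ Set.Icc (0:ℝ) 1) :
    (∀ x ∈ Set.Icc (0:ℝ) 1, frogA g x ∈ Set.Icc (0:ℝ) 1) ∧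
      MonotoneOn (frogA g) (Set.Icc 0 1) := by
  constructor
  · rintro x ⟨hx0, hx1⟩
    have hl : x / 2 ∈ Set.Icc (0:ℝ) 1 := ⟨by linarith, by linarith⟩
    have hr : (x + 1) / 2 ∈ Set.Icc (0:ℝ) 1 := ⟨by linarith, by linarith⟩
    have hab := hgmono hl hr (by linarith)
    obtain ⟨ha0, ha1⟩ := hgmem _ hl
    obtain ⟨hb0, hb1⟩ := hgmem _ hr
    unfold frogA
    generalize g (x / 2) = a at *
    generalize g ((x + 1) / 2) = b at *
    have hb' : 0 ≤ 1 - b := by linarith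
    constructor
    · positivity
    · calc (x + 2) / 3 * b ^ 2 + (x + 1) / 3 * a * (1 - b)
          ≤ 1 * b ^ 2 + 1 * b * (1 - b) := by gcongr <;> linarith
        _ = b := by ring
        _ ≤ 1 := hb1
  · rintro x ⟨hx0, hx1⟩ y ⟨hy0, hy1⟩ hxy
    have hxl : x / 2 ∈ Set.Icc (0:ℝ) 1 := ⟨by linarith, by linarith⟩
    have hxr : (x + 1) / 2 ∈ Set.Icc (0:ℝ) 1 := ⟨by linarith, by linarith⟩
    have hyl : y / 2 ∈ Set.Icc (0:ℝ) 1 := ⟨by linarith, by linarith⟩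
    have hyr : (y + 1) / 2 ∈ Set.Icc (0:ℝ) 1 := ⟨by linarith, by linarith⟩
    have hac := hgmono hxl hyl (by linarith)
    have hbd := hgmono hxr hyr (by linarith)
    -- `y / 2` lies in the left half of the interval and `(x + 1) / 2` in the right half.
    have hcb := hgmono hyl hxr (by linarith)
    obtain ⟨ha0, -⟩ := hgmem _ hxl
    obtain ⟨hb0, hb1⟩ := hgmem _ hxr
    obtain ⟨hc0, -⟩ := hgmem _ hyl
    unfold frogA
    generalize g (x / 2) = a at *
    generalize g ((x + 1) / 2) = b at *
    generalize g (y / 2) = c at *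
    generalize g ((y + 1) / 2) = d at *
    have hb' : 0 ≤ 1 - b := by linarith
    calc (x + 2) / 3 * b ^ 2 + (x + 1) / 3 * a * (1 - b)
        ≤ (y + 2) / 3 * b ^ 2 + (y + 1) / 3 * c * (1 - b) := by gcongr
      _ ≤ (y + 2) / 3 * d ^ 2 + (y + 1) / 3 * c * (1 - d) := by
        have hcoef : 0 ≤ (y + 2) * (d + b) - (y + 1) * c := by
          have hcd : c ≤ d + b := by linarith
          have : (y + 1) * c ≤ (y + 2) * (d + b) := by gcongr <;> linarith
          linarith
        linarith [mul_nonneg (sub_nonneg.2 hbd) hcoef]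
end

section
/- For every a ≥ 0 and every x ∈ [0,1], 𝒜g_a(x) ≤ g_{a + c_a}(x), i.e. ((x+2)/3)·e^{a(x−1)} + ((x+1)/3)·e^{a x/2 − a}·(1 − e^{a(x−1)/2}) ≤ e^{(a + c_a)(x−1)}. -/
/-- `g_a(x) = exp(a(x−1))`, the generating function of a Poisson(a) random variable. -/
noncomputable def ga (a x : ℝ) : ℝ := Real.exp (a * (x - 1))

/-- `c_a = e^{−2}/3` for `0 ≤ a ≤ 4` and `c_a = e^{−a/2}/3` for `a ≥ 4`. -/
noncomputable def ccoef (a : ℝ) : ℝ :=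
  if a ≤ 4 then Real.exp (-2) / 3 else Real.exp (-a / 2) / 3

/-- The third-order Taylor remainder of `exp`, divided by the cube of its argument, is monotone on
`[0, ∞)`, because its power series has nonnegative coefficients. -/
lemma exp_mul_le_cubic {b t : ℝ} (hb : 0 ≤ b) (ht : 0 ≤ t) (ht1 : t ≤ 1) :
    Real.exp (b * t) ≤ 1 + b * t + (b * t) ^ 2 / 2
      + t ^ 3 * (Real.exp b - 1 - b - b ^ 2 / 2) := by
  have key (u : ℝ) : HasSum (fun n : ℕ => u ^ (n + 3) / ((n + 3).factorial : ℝ))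
      (Real.exp u - 1 - u - u ^ 2 / 2) := by
    have h : HasSum (fun n : ℕ => u ^ n / (n.factorial : ℝ)) (Real.exp u) := by
      rw [Real.exp_eq_exp_ℝ]
      exact NormedSpace.expSeries_div_hasSum_exp u
    have h3 := (hasSum_nat_add_iff' 3).mpr h
    have e : Real.exp u - ∑ i ∈ Finset.range 3, u ^ i / (i.factorial : ℝ)
        = Real.exp u - 1 - u - u ^ 2 / 2 := by
      simp [Finset.sum_range_succ, Nat.factorial]
      ring
    rwa [e] at h3
  have h := hasSum_le (fun n => ?_) (key (b * t)) ((key b).mul_left (t ^ 3))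
  · linarith
  · rw [← mul_div_assoc]
    gcongr
    rw [mul_pow, mul_comm]
    gcongr ?_ * _
    exact pow_le_pow_of_le_one ht ht1 (by omega)

lemma taylor_rem_lower {b : ℝ} (hb : 0 ≤ b) :
    b ^ 3 / 6 + b ^ 4 / 24 ≤ Real.exp b - 1 - b - b ^ 2 / 2 := by
  have h := Real.sum_le_exp_of_nonneg hb 5
  simp [Finset.sum_range_succ, Nat.factorial] at h
  linarith

/-- For `b ≤ 2` the quadratic in `s` is nonnegative: after inserting the bounds on `m` and
`r`, its discriminant is nonpositive. -/
lemma poly_nonneg_small {b s m r : ℝ} (hb : 0 ≤ b) (hb2 : b ≤ 2) (hs : 0 ≤ s)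
    (hm : m ≤ 1 / (3 - b)) (hr : b ^ 3 / 6 + b ^ 4 / 24 ≤ r) :
    0 ≤ (1 - m) + s * (r - b) + s ^ 2 * (b ^ 2 / 2) := by
  have h3 : 0 < 3 - b := by linarith
  have h1 : s * (b ^ 3 / 6 + b ^ 4 / 24 - b) ≤ s * (r - b) := by gcongr
  have h2 : (2 - b) / (3 - b) ≤ 1 - m := by
    have : (2 - b) / (3 - b) = 1 - 1 / (3 - b) := by field_simp; ring
    linarith
  -- With `w = b s` and `q = (b² + 6 b + 12) / 24`, the lower bound is
  -- `(2 - b) / (3 - b) - (2 - b) q w + w² / 2`.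
  set q := (b ^ 2 + 6 * b + 12) / 24 with hq
  have hdisc : (2 - b) * q ^ 2 * (3 - b) ≤ 2 := by
    rw [hq]
    nlinarith [mul_nonneg hb (sub_nonneg.2 hb2), sq_nonneg (b - 1 / 4), sq_nonneg b,
      mul_nonneg (mul_nonneg hb (sub_nonneg.2 hb2)) (sq_nonneg b),
      mul_nonneg (mul_nonneg hb (sub_nonneg.2 hb2)) (sq_nonneg (b * b)),
      pow_nonneg hb 3, pow_nonneg hb 4, pow_nonneg hb 5]
  have h4 : (2 - b) * ((2 - b) * q ^ 2) / 2 ≤ (2 - b) / (3 - b) := by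
    rw [le_div_iff₀ h3]
    nlinarith [mul_le_mul_of_nonneg_left hdisc (sub_nonneg.2 hb2)]
  have h5 : s * (b ^ 3 / 6 + b ^ 4 / 24 - b) = - ((2 - b) * q * (b * s)) := by
    rw [hq]; ring
  nlinarith [sq_nonneg (b * s - (2 - b) * q)]

lemma reduced_ineq {b t m : ℝ} (hb : 0 ≤ b) (ht : 0 ≤ t) (ht1 : t ≤ 1)
    (hm : (b ≤ 2 ∧ m ≤ 1 / (3 - b)) ∨ (2 ≤ b ∧ m ≤ 1)) :
    (2 - t) * (Real.exp (b * t) - 1) ≤ t * (Real.exp b - m) := by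
  have h1 := exp_mul_le_cubic hb ht ht1
  have hr := taylor_rem_lower hb
  set r := Real.exp b - 1 - b - b ^ 2 / 2 with hrdef
  have hE : Real.exp b = 1 + b + b ^ 2 / 2 + r := by rw [hrdef]; ring
  have hr0 : 0 ≤ r := le_trans (by positivity) hr
  have hs : 0 ≤ 1 - t := by linarith
  have hP : 0 ≤ (1 - m) + (1 - t) * (r - b) + (1 - t) ^ 2 * (b ^ 2 / 2) := by
    rcases hm with ⟨hb2, hm⟩ | ⟨hb2, hm⟩
    · exact poly_nonneg_small hb hb2 hs hm hr
    · have hrb : b ≤ r := by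
        refine le_trans ?_ hr
        have : b ^ 3 / 6 + b ^ 4 / 24 - b = b * (b - 2) * (b ^ 2 + 6 * b + 12) / 24 := by ring
        have : 0 ≤ b * (b - 2) * (b ^ 2 + 6 * b + 12) / 24 := by
          have : 0 ≤ b - 2 := by linarith
          positivity
        linarith
      have := mul_nonneg hs (sub_nonneg.2 hrb)
      have : 0 ≤ (1 - t) ^ 2 * (b ^ 2 / 2) := by positivity
      linarith
  have h2 : 0 ≤ t * ((1 - m) + (1 - t) * (r - b) + (1 - t) ^ 2 * (b ^ 2 / 2)
      + r * (1 - t) ^ 2 * t) := by positivity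
  have h3 := mul_le_mul_of_nonneg_left h1 (by linarith : 0 ≤ 2 - t)
  rw [hE]
  linarith

/-- For every `a ≥ 0` and every `x ∈ [0,1]`, `𝒜 g_a (x) ≤ g_{a + c_a}(x)`, i.e.
`((x+2)/3)·e^{a(x−1)} + ((x+1)/3)·e^{ax/2−a}·(1 − e^{a(x−1)/2}) ≤ e^{(a+c_a)(x−1)}`. -/
theorem frogA_ga_le (a : ℝ) (ha : 0 ≤ a) :
    ∀ x ∈ Set.Icc (0:ℝ) 1, frogA (ga a) x ≤ ga (a + ccoef a) x := by
  rintro x ⟨hx0, hx1⟩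
  have hmain := reduced_ineq (b := a / 2) (t := 1 - x) (m := 3 * ccoef a * Real.exp (a / 2))
    (by linarith) (by linarith) (by linarith) (by
      unfold ccoef
      split_ifs with h
      · left
        refine ⟨by linarith, ?_⟩
        have h1 : 3 * (Real.exp (-2) / 3) * Real.exp (a / 2) = (Real.exp (2 - a / 2))⁻¹ := by
          rw [← Real.exp_neg, mul_div_cancel₀ _ (by norm_num : (3:ℝ) ≠ 0), ← Real.exp_add]
          ring_nf
        rw [h1, one_div]
        have := Real.add_one_le_exp (2 - a / 2)
        exact inv_anti₀ (by linarith) (by linarith)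
      · right
        refine ⟨by linarith, ?_⟩
        rw [mul_div_cancel₀ _ (by norm_num : (3:ℝ) ≠ 0), ← Real.exp_add]
        apply le_of_eq
        rw [Real.exp_eq_one_iff]
        ring)
  set c := ccoef a
  have hexp := Real.add_one_le_exp (c * (x - 1))
  unfold frogA ga
  -- Apart from `exp (c (x - 1))`, every exponential is a monomial in `Y = exp (a (x - 1) / 2)`,
  -- `B = exp (a / 2)` and their inverses.
  have e1 : Real.exp (a * ((x + 1) / 2 - 1)) = Real.exp (a * (x - 1) / 2) := by ring_nf
  have e2 : Real.exp (a * (x / 2 - 1)) = Real.exp (a * (x - 1) / 2) * Real.exp (-(a / 2)) := by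
    rw [← Real.exp_add]; ring_nf
  have e3 : Real.exp ((a + c) * (x - 1))
      = Real.exp (a * (x - 1) / 2) ^ 2 * Real.exp (c * (x - 1)) := by
    rw [← Real.exp_nat_mul, ← Real.exp_add]; push_cast; ring_nf
  have e4 : Real.exp (a / 2 * (1 - x)) = (Real.exp (a * (x - 1) / 2))⁻¹ := by
    rw [← Real.exp_neg]; ring_nf
  rw [e1, e2, e3]
  rw [e4] at hmain
  have hY := Real.exp_pos (a * (x - 1) / 2)
  have hB := Real.exp_pos (a / 2)
  rw [Real.exp_neg]
  set Y := Real.exp (a * (x - 1) / 2)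
  set B := Real.exp (a / 2)
  have h5 : Y ^ 2 * (c * (x - 1) + 1) ≤ Y ^ 2 * Real.exp (c * (x - 1)) := by gcongr
  refine le_trans ?_ h5
  have h6 := mul_le_mul_of_nonneg_left hmain (by positivity : 0 ≤ Y ^ 2 * B⁻¹ / 3)
  have h7 : Y ^ 2 * B⁻¹ / 3 * ((2 - (1 - x)) * (Y⁻¹ - 1))
      = (x + 1) / 3 * (Y * B⁻¹) * (1 - Y) := by
    field_simp; ring
  have h8 : Y ^ 2 * B⁻¹ / 3 * ((1 - x) * (B - 3 * c * B))
      = Y ^ 2 * (c * (x - 1) + 1) - (x + 2) / 3 * Y ^ 2 := by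
    field_simp; ring
  linarith
end

section
/- Factorization identity: for every a ≥ 0 and every x ∈ [0,1], 𝒜g_a(x) = g_a(x) · r_{a/2}(x). -/
/-- `r_b(x) = (2+x)/3 + ((1+x)/3)·(e^{−bx} − e^{−b})`. -/
noncomputable def rfun (b x : ℝ) : ℝ :=
  (2 + x) / 3 + ((1 + x) / 3) * (Real.exp (-b * x) - Real.exp (-b))

/-- Factorization identity: for `a ≥ 0` and `x ∈ [0,1]`, `𝒜 g_a (x) = g_a(x) · r_{a/2}(x)`. -/
theorem frogA_ga_eq (a : ℝ) (ha : 0 ≤ a) :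
    ∀ x ∈ Set.Icc (0:ℝ) 1, frogA (ga a) x = ga a x * rfun (a / 2) x := by
  intro x _
  -- The midpoint value `g_a((x+1)/2)` is the square root of `g_a(x)`.
  have hsq : ga a ((x + 1) / 2) ^ 2 = ga a x := by
    unfold ga
    rw [sq, ← Real.exp_add]
    congr 1
    ring
  have hhalf : ga a (x / 2) = ga a x * Real.exp (-(a / 2) * x) := by
    unfold ga
    rw [← Real.exp_add]
    congr 1
    ring
  have hmul : ga a (x / 2) * ga a ((x + 1) / 2) = ga a x * Real.exp (-(a / 2)) := by
    unfold ga
    rw [← Real.exp_add, ← Real.exp_add]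
    congr 1
    ring
  unfold frogA rfun
  linear_combination (x + 2) / 3 * hsq + (x + 1) / 3 * hhalf - (x + 1) / 3 * hmul
end

section
/- For every b ≥ 0 and every x ∈ [0,1], r_b(x) ≤ exp(c_{2b}(x−1)); explicitly, (2+x)/3 + ((1+x)/3)·(e^{−bx} − e^{−b}) ≤ exp(c_{2b}(x−1)). -/
/-- For `b ≥ 2` the convex function `x ↦ (1+x) e^{-bx}` is below its chord on `[0,1]`. -/
lemma chord_bound (b : ℝ) (hb : 2 ≤ b) (x : ℝ) (h0 : 0 ≤ x) (h1 : x ≤ 1) :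
    (1 + x) * Real.exp (-b * x) ≤ (1 - x) + 2 * x * Real.exp (-b) := by
  have hE : ∀ y : ℝ, HasDerivAt (fun y => Real.exp (-b * y)) (Real.exp (-b * y) * -b) y := by
    intro y
    have h := ((hasDerivAt_id y).const_mul (-b)).exp
    simpa using h
  have hd1 : ∀ y : ℝ, HasDerivAt (fun y => (1 + y) * Real.exp (-b * y))
      ((1 - b * (1 + y)) * Real.exp (-b * y)) y := by
    intro y
    have h := ((hasDerivAt_id y).const_add 1).mul (hE y)
    refine h.congr_deriv ?_
    simp only [id]
    ring
  have hd2 : ∀ y : ℝ, HasDerivAt (fun y => (1 - b * (1 + y)) * Real.exp (-b * y))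
      (b * (b * (1 + y) - 2) * Real.exp (-b * y)) y := by
    intro y
    have h := ((((hasDerivAt_id y).const_add 1).const_mul b).const_sub 1).mul (hE y)
    refine h.congr_deriv ?_
    simp only [id]
    ring
  have hconv : ConvexOn ℝ (Set.Icc (0 : ℝ) 1) (fun y => (1 + y) * Real.exp (-b * y)) := by
    refine convexOn_of_hasDerivWithinAt2_nonneg (convex_Icc 0 1)
      (fun y _ => (hd1 y).continuousAt.continuousWithinAt)
      (fun y _ => (hd1 y).hasDerivWithinAt) (fun y _ => (hd2 y).hasDerivWithinAt) ?_
    intro y hy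
    have hy0 : 0 ≤ y := (interior_subset hy).1
    have : 0 ≤ b * (1 + y) - 2 := by nlinarith
    have : 0 ≤ b := by linarith
    positivity
  have h := hconv.2 (x := 0) (by simp) (y := 1) (by simp) (sub_nonneg.2 h1) h0 (by ring)
  simp only [smul_eq_mul, mul_zero, mul_one, zero_add, Real.exp_zero, add_zero] at h
  linarith

/-- Tangent line bound at `s = e^{-c}` for the concave function `t ↦ t^x`, at `t = e^{-b}`. -/
lemma tangent_bound (b c x : ℝ) (h0 : 0 ≤ x) (h1 : x ≤ 1) :
    Real.exp (-b * x) ≤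
      (1 - x) * Real.exp (-c * x) + x * Real.exp (c * (1 - x)) * Real.exp (-b) := by
  have h := convexOn_exp.2 (Set.mem_univ (0 : ℝ)) (Set.mem_univ (c - b))
    (sub_nonneg.2 h1) h0 (by ring)
  simp only [smul_eq_mul, mul_zero, zero_add, Real.exp_zero, mul_one] at h
  have h2 := mul_le_mul_of_nonneg_left h (Real.exp_pos (-c * x)).le
  have e1 : Real.exp (-b * x) = Real.exp (-c * x) * Real.exp (x * (c - b)) := by
    rw [← Real.exp_add]; ring_nf
  have e2 : Real.exp (c * (1 - x)) * Real.exp (-b) =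
      Real.exp (-c * x) * Real.exp (c - b) := by
    rw [← Real.exp_add, ← Real.exp_add]; ring_nf
  rw [e1, mul_assoc, e2]
  linarith

lemma exp_neg_two_le : Real.exp (-2) ≤ 0.1354 := by
  have h : Real.exp 2 = Real.exp 1 ^ 2 := by rw [← Real.exp_nat_mul]; norm_num
  have := Real.exp_one_gt_d9
  rw [Real.exp_neg, h]
  apply inv_le_of_inv_le₀ (by norm_num)
  norm_num at this ⊢
  nlinarith

/-- The tangent at `e^{-2}` has nonpositive slope when `x ≤ 1/5`. -/
lemma slope_small (x : ℝ) (h1 : x ≤ 1 / 5) :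
    x * Real.exp (2 * (1 - x)) ≤ 1 := by
  have h5 : Real.exp (8 / 5) ≤ 5 := by
    have h : Real.exp (8 / 5) ^ 5 = Real.exp 1 ^ 8 := by
      rw [← Real.exp_nat_mul, ← Real.exp_nat_mul]; norm_num
    have h8 : Real.exp 1 ^ 8 ≤ 5 ^ 5 :=
      (pow_le_pow_left₀ (Real.exp_pos 1).le Real.exp_one_lt_d9.le 8).trans (by norm_num)
    exact (pow_le_pow_iff_left₀ (Real.exp_pos _).le (by norm_num) (by norm_num : 5 ≠ 0)).1
      (h.le.trans h8)
  have hl := Real.add_one_le_exp (2 * x - 2 / 5)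
  have e : Real.exp (2 * (1 - x)) * Real.exp (2 * x - 2 / 5) = Real.exp (8 / 5) := by
    rw [← Real.exp_add]; ring_nf
  have hp := Real.exp_pos (2 * (1 - x))
  -- `5 x ≤ 3/5 + 2 x ≤ e^{2x - 2/5}`
  have h6 : 5 * x ≤ Real.exp (2 * x - 2 / 5) := by linarith
  have := mul_le_mul_of_nonneg_left h6 hp.le
  linarith

/-- The tangent at `e^{-2/(1+x)}` has nonpositive slope; this is `log y ≥ 2(y-1)/(y+1)` for
`y = 1/x`. -/
lemma slope_large (x : ℝ) (h0 : 0 < x) (h1 : x ≤ 1) :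
    x * Real.exp (2 / (1 + x) * (1 - x)) ≤ 1 := by
  have hy : 0 ≤ x⁻¹ - 1 := sub_nonneg.2 ((one_le_inv₀ h0).2 h1)
  have h := Real.le_log_one_add_of_nonneg hy
  have e : 2 * (x⁻¹ - 1) / (x⁻¹ - 1 + 2) = 2 / (1 + x) * (1 - x) := by
    have : 1 + x ≠ 0 := by positivity
    have h2 : x⁻¹ - 1 + 2 = (1 + x) / x := by field_simp; ring
    rw [h2]
    field_simp
  rw [e, add_sub_cancel, Real.le_log_iff_exp_le (by positivity)] at h
  calc _ ≤ x * x⁻¹ := mul_le_mul_of_nonneg_left h h0.le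
    _ = 1 := mul_inv_cancel₀ h0.ne'

lemma value_large (x : ℝ) (h0 : 1 / 5 ≤ x) (h1 : x ≤ 1) :
    (1 + x) * Real.exp (-(2 / (1 + x)) * x) ≤ 1 - Real.exp (-2) := by
  have h3 : 1.388 ≤ Real.exp (1 / 3) := by
    have h : Real.exp (1 / 3) ^ 3 = Real.exp 1 := by
      rw [← Real.exp_nat_mul]; norm_num
    refine (pow_le_pow_iff_left₀ (by norm_num) (Real.exp_pos _).le (by norm_num : 3 ≠ 0)).1 ?_
    rw [h]
    exact le_trans (by norm_num) Real.exp_one_gt_d9.le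
  have hx : 0 < 1 + x := by linarith
  set z := 2 / (1 + x) * x with hz
  have hzx : z * (1 + x) = 2 * x := by rw [hz]; field_simp
  have hl := Real.add_one_le_exp (z - 1 / 3)
  have e : Real.exp (-z) * (Real.exp (1 / 3) * Real.exp (z - 1 / 3)) = 1 := by
    rw [← Real.exp_add, ← Real.exp_add]; ring_nf; exact Real.exp_zero
  have hz0 : 0 ≤ z := by rw [hz]; positivity
  -- `(1+x)² ≤ (6/5)(2/3 (1+x) + 2x)` holds on `[1/5, 1]`, with equality at both ends
  have hk : 1 + x ≤ 6 / 5 * (z + 2 / 3) := by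
    refine le_of_mul_le_mul_right ?_ hx
    nlinarith
  have hq : 1 + x ≤ 0.8646 * (Real.exp (1 / 3) * Real.exp (z - 1 / 3)) := by
    have := mul_le_mul h3 hl (by linarith) (Real.exp_pos _).le
    linarith
  have := mul_le_mul_of_nonneg_right hq (Real.exp_pos (-z)).le
  rw [neg_mul]
  have := exp_neg_two_le
  linarith

/-- The bound `(1+x)(e^{-bx} - e^{-b}) ≤ (1-x)(1 - 3 c_{2b})` for `b ≤ 2`. -/
lemma core_small (b : ℝ) (hb : b ≤ 2) (x : ℝ) (h0 : 0 ≤ x) (h1 : x ≤ 1) :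
    (1 + x) * (Real.exp (-b * x) - Real.exp (-b)) ≤ (1 - x) * (1 - Real.exp (-2)) := by
  rcases le_total x (1 / 5) with hx | hx
  · have ht := tangent_bound b 2 x h0 h1
    have hs := slope_small x hx
    have hm : Real.exp (-2) ≤ Real.exp (-b) := Real.exp_le_exp.2 (by linarith)
    have hc := chord_bound 2 le_rfl x h0 h1
    have e : Real.exp (2 * (1 - x)) * Real.exp (-2) = Real.exp (-2 * x) := by
      rw [← Real.exp_add]; ring_nf
    have hp := mul_nonneg (sub_nonneg.2 hs) (sub_nonneg.2 hm)
    have : Real.exp (-b * x) - Real.exp (-b) ≤ Real.exp (-2 * x) - Real.exp (-2) := by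
      linear_combination ht + hp + x * e
    have := mul_le_mul_of_nonneg_left this (by linarith : 0 ≤ 1 + x)
    linarith
  · have ht := tangent_bound b (2 / (1 + x)) x h0 h1
    have hs := slope_large x (by linarith) h1
    have hv := value_large x hx h1
    have hp := mul_le_mul_of_nonneg_right hs (Real.exp_pos (-b)).le
    have : Real.exp (-b * x) - Real.exp (-b) ≤ (1 - x) * Real.exp (-(2 / (1 + x)) * x) := by
      linarith
    have := mul_le_mul_of_nonneg_left this (by linarith : 0 ≤ 1 + x)
    have := mul_le_mul_of_nonneg_left hv (sub_nonneg.2 h1)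
    linarith

/-- For every `b ≥ 0` and every `x ∈ [0,1]`, `r_b(x) ≤ exp(c_{2b}(x−1))`. -/
theorem rfun_le_exp (b : ℝ) (hb : 0 ≤ b) :
    ∀ x ∈ Set.Icc (0:ℝ) 1, rfun b x ≤ Real.exp (ccoef (2 * b) * (x - 1)) := by
  rintro x ⟨h0, h1⟩
  refine le_trans ?_ (Real.add_one_le_exp _)
  unfold rfun ccoef
  split_ifs with h
  · have := core_small b (by linarith) x h0 h1
    linarith
  · have := chord_bound b (by linarith) x h0 h1
    have e : -(2 * b) / 2 = -b := by ring
    rw [e]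
    linarith
end

section
/- Tangent-line bound in the concave case: for every b with 0 < b ≤ 1 and every x ∈ [0,1], r_b(x) ≤ 1 + (1/3)·(1 − 2b·e^{−b})·(x − 1). -/
/-- The Padé bound `e^s ≤ (2 + s) / (2 - s)` on `[0, 1]`, cleared of denominators; it follows from
the Taylor bound `e^s ≤ 1 + s + s² / 2 + 2 s³ / 9`. -/
lemma two_sub_mul_exp_sub_one_le {s : ℝ} (h0 : 0 ≤ s) (h1 : s ≤ 1) :
    (2 - s) * (Real.exp s - 1) ≤ 2 * s := by
  have h := Real.exp_bound' h0 h1 (n := 3) (by norm_num)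
  norm_num [Finset.sum_range_succ, Nat.factorial] at h
  have h' : Real.exp s - 1 ≤ s + s ^ 2 / 2 + 2 * s ^ 3 / 9 := by linarith
  have h3 : 0 ≤ s ^ 3 := by positivity
  have h4 : 0 ≤ s ^ 4 := by positivity
  calc (2 - s) * (Real.exp s - 1) ≤ (2 - s) * (s + s ^ 2 / 2 + 2 * s ^ 3 / 9) :=
        mul_le_mul_of_nonneg_left h' (by linarith)
    _ ≤ 2 * s := by linarith

/-- Tangent-line bound in the concave case: for `0 < b ≤ 1` and `x ∈ [0,1]`,
`r_b(x) ≤ 1 + (1/3)(1 − 2b e^{−b})(x − 1)`. -/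
theorem rfun_tangent_bound (b : ℝ) (hb0 : 0 < b) (hb1 : b ≤ 1) :
    ∀ x ∈ Set.Icc (0:ℝ) 1,
      rfun b x ≤ 1 + (1 / 3) * (1 - 2 * b * Real.exp (-b)) * (x - 1) := by
  rintro x ⟨hx0, hx1⟩
  have hs0 : 0 ≤ b * (1 - x) := mul_nonneg hb0.le (by linarith)
  have hst : b * (1 - x) ≤ 1 - x := mul_le_of_le_one_left (by linarith) hb1
  have hpade := two_sub_mul_exp_sub_one_le hs0 (by linarith)
  have hexp : 0 ≤ Real.exp (b * (1 - x)) - 1 := by linarith [Real.one_le_exp hs0]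
  have hkey : (1 + x) * (Real.exp (b * (1 - x)) - 1) ≤ 2 * (b * (1 - x)) :=
    (mul_le_mul_of_nonneg_right (by linarith) hexp).trans hpade
  have hsplit : Real.exp (-b * x) = Real.exp (-b) * Real.exp (b * (1 - x)) := by
    rw [← Real.exp_add]
    ring_nf
  have hmul := mul_le_mul_of_nonneg_left hkey (Real.exp_pos (-b)).le
  rw [rfun, hsplit]
  linarith
end

section
/- Secant-line bound in the convex case: for every b ≥ 2 and every x ∈ [0,1], r_b(x) ≤ 1 + (1/3)·e^{−b}·(x − 1). -/
lemma convexOn_one_add_mul_exp (b : ℝ) (hb : 2 ≤ b) :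
    ConvexOn ℝ (Set.Icc 0 1) (fun x : ℝ => (1 + x) * Real.exp (-b * x)) := by
  have hexp (x : ℝ) : HasDerivAt (fun y : ℝ => Real.exp (-b * y)) (Real.exp (-b * x) * -b) x := by
    simpa using ((hasDerivAt_id x).const_mul (-b)).exp
  refine convexOn_of_hasDerivWithinAt2_nonneg (convex_Icc 0 1) (by fun_prop)
    (f' := fun x => (1 - b * (1 + x)) * Real.exp (-b * x))
    (f'' := fun x => b * (b * (1 + x) - 2) * Real.exp (-b * x)) ?_ ?_ ?_
  · intro x _
    refine HasDerivAt.hasDerivWithinAt ?_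
    refine (((hasDerivAt_id' x).const_add 1).mul (hexp x)).congr_deriv ?_
    ring
  · intro x _
    refine HasDerivAt.hasDerivWithinAt ?_
    refine (((((hasDerivAt_id' x).const_add 1).const_mul b).const_sub 1).mul
      (hexp x)).congr_deriv ?_
    ring
  · intro x hx
    rw [interior_Icc] at hx
    have h : 0 ≤ b * (1 + x) - 2 := by nlinarith [hx.1]
    positivity

/-- Secant-line bound in the convex case: for `b ≥ 2` and `x ∈ [0,1]`,
`r_b(x) ≤ 1 + (1/3)·e^{−b}·(x − 1)`. -/
theorem rfun_secant_bound (b : ℝ) (hb : 2 ≤ b) :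
    ∀ x ∈ Set.Icc (0:ℝ) 1,
      rfun b x ≤ 1 + (1 / 3) * Real.exp (-b) * (x - 1) := by
  intro x hx
  have h := (convexOn_one_add_mul_exp b hb).2 (Set.left_mem_Icc.2 zero_le_one)
    (Set.right_mem_Icc.2 zero_le_one) (sub_nonneg.2 hx.2) hx.1 (sub_add_cancel 1 x)
  simp only [smul_eq_mul, mul_zero, mul_one, zero_add, add_zero, Real.exp_zero] at h
  unfold rfun
  linarith
end

section
/- Mixed-concavity bound: for every b with 1 < b < 2 and every x ∈ [0,1], r_b(x) ≤ 1 + (1 − (1/3)·(2 + (4/b − 1)·e^{b−2} − e^{−b}))·(x − 1). -/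
/-- The tangent line of `(u + 2) e^{-u}` at its inflection point `u = 0`, minus the function, is
antitone: its derivative is `(1 + u) e^{-u} - 1 ≤ 0`. -/
lemma inflection_gap_antitone : Antitone fun u : ℝ => (2 - u) - (u + 2) * Real.exp (-u) := by
  have hd (u : ℝ) : HasDerivAt (fun u : ℝ => (2 - u) - (u + 2) * Real.exp (-u))
      ((1 + u) * Real.exp (-u) - 1) u := by
    refine HasDerivAt.congr_deriv (((hasDerivAt_id' u).const_sub 2).sub
      (((hasDerivAt_id' u).add_const 2).mul (hasDerivAt_neg u).exp)) ?_
    ring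
  refine antitone_of_deriv_nonpos (fun u => (hd u).differentiableAt) fun u => ?_
  rw [(hd u).deriv]
  have h1 := mul_le_mul_of_nonneg_right (Real.add_one_le_exp u) (Real.exp_pos (-u)).le
  rw [← Real.exp_add, add_neg_cancel, Real.exp_zero] at h1
  linarith

/-- The change of variable `u = b (x - (2/b - 1)) = bx - 2 + b`. -/
lemma mul_exp_eq_shift {b : ℝ} (hb : 0 < b) (x : ℝ) :
    (1 + x) * Real.exp (-b * x) =
      Real.exp (b - 2) / b * (((b * x - 2 + b) + 2) * Real.exp (-(b * x - 2 + b))) := by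
  have : Real.exp (-b * x) = Real.exp (b - 2) * Real.exp (-(b * x - 2 + b)) := by
    rw [← Real.exp_add]
    ring_nf
  rw [this]
  field_simp
  ring

lemma mul_exp_le_tangent {b x : ℝ} (hb : 0 < b) (hx : b * x ≤ 2 - b) :
    (1 + x) * Real.exp (-b * x) ≤ (4 / b - 1 - x) * Real.exp (b - 2) := by
  have h := inflection_gap_antitone (show b * x - 2 + b ≤ 0 by linarith)
  simp only [neg_zero, Real.exp_zero] at h
  rw [mul_exp_eq_shift hb, show (4 / b - 1 - x) * Real.exp (b - 2) =
    Real.exp (b - 2) / b * (2 - (b * x - 2 + b)) by field_simp; ring]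
  gcongr
  linarith

lemma tangent_le_mul_exp {b x : ℝ} (hb : 0 < b) (hx : 2 - b ≤ b * x) :
    (4 / b - 1 - x) * Real.exp (b - 2) ≤ (1 + x) * Real.exp (-b * x) := by
  have h := inflection_gap_antitone (show 0 ≤ b * x - 2 + b by linarith)
  simp only [neg_zero, Real.exp_zero] at h
  rw [mul_exp_eq_shift hb, show (4 / b - 1 - x) * Real.exp (b - 2) =
    Real.exp (b - 2) / b * (2 - (b * x - 2 + b)) by field_simp; ring]
  gcongr
  linarith

lemma convexOn_sub_affine {b : ℝ} (hb : 0 < b) (p q : ℝ) :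
    ConvexOn ℝ (Set.Icc (2 / b - 1) 1)
      (fun x => (1 + x) * Real.exp (-b * x) - (p * x + q * (1 - x))) := by
  have hd (x : ℝ) : HasDerivAt (fun x => (1 + x) * Real.exp (-b * x) - (p * x + q * (1 - x)))
      ((1 - b * (1 + x)) * Real.exp (-b * x) - (p - q)) x := by
    refine HasDerivAt.congr_deriv ((((hasDerivAt_id' x).const_add 1).mul ((hasDerivAt_id' x).const_mul (-b)).exp).sub
      (((hasDerivAt_id' x).const_mul p).add (((hasDerivAt_id' x).const_sub 1).const_mul q))) ?_
    ring
  have hd2 (x : ℝ) : HasDerivAt (fun x => (1 - b * (1 + x)) * Real.exp (-b * x) - (p - q))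
      (b * (b * (1 + x) - 2) * Real.exp (-b * x)) x := by
    refine HasDerivAt.congr_deriv (((((hasDerivAt_id' x).const_add 1).const_mul b).const_sub 1 |>.mul
      ((hasDerivAt_id' x).const_mul (-b)).exp).sub_const (p - q)) ?_
    ring
  refine convexOn_of_hasDerivWithinAt2_nonneg (convex_Icc _ _)
    (fun x _ => (hd x).continuousAt.continuousWithinAt)
    (fun x _ => (hd x).hasDerivWithinAt) (fun x _ => (hd2 x).hasDerivWithinAt) fun x hx => ?_
  rw [interior_Icc] at hx
  have h2 : 2 < (1 + x) * b := (div_lt_iff₀ hb).1 (by linarith [hx.1])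
  have : 0 ≤ b * (1 + x) - 2 := by linarith
  positivity

/-- Mixed-concavity bound: for `1 < b < 2` and `x ∈ [0,1]`,
`r_b(x) ≤ 1 + (1 − (1/3)(2 + (4/b − 1)e^{b−2} − e^{−b}))(x − 1)`. -/
theorem rfun_mixed_bound (b : ℝ) (hb1 : 1 < b) (hb2 : b < 2) :
    ∀ x ∈ Set.Icc (0:ℝ) 1,
      rfun b x ≤
        1 + (1 - (1 / 3) * (2 + (4 / b - 1) * Real.exp (b - 2) - Real.exp (-b))) * (x - 1) := by
  rintro x ⟨hx0, hx1⟩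
  have hb : 0 < b := by linarith
  have h1 := tangent_le_mul_exp (x := 1) hb (by linarith)
  rw [mul_one] at h1
  have left {y : ℝ} (hy0 : 0 ≤ y) (hy : b * y ≤ 2 - b) : (1 + y) * Real.exp (-b * y) ≤
      2 * Real.exp (-b) * y + (4 / b - 1) * Real.exp (b - 2) * (1 - y) := by
    linarith [mul_exp_le_tangent hb hy, mul_le_mul_of_nonneg_right h1 hy0]
  have key : (1 + x) * Real.exp (-b * x) ≤
      2 * Real.exp (-b) * x + (4 / b - 1) * Real.exp (b - 2) * (1 - x) := by
    rcases le_total (b * x) (2 - b) with hx | hx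
    · exact left hx0 hx
    · have hI : 0 ≤ 2 / b - 1 := by
        rw [sub_nonneg, one_le_div hb]
        exact hb2.le
      have hIx : 2 / b - 1 ≤ x := by
        rw [sub_le_iff_le_add, div_le_iff₀ hb]
        linarith
      have hL := left hI (by field_simp; rfl)
      have hm := (convexOn_sub_affine hb (2 * Real.exp (-b))
        ((4 / b - 1) * Real.exp (b - 2))).le_max_of_mem_Icc
        (Set.left_mem_Icc.2 (hIx.trans hx1)) (Set.right_mem_Icc.2 (hIx.trans hx1)) ⟨hIx, hx1⟩
      refine sub_nonpos.1 (hm.trans (max_le (sub_nonpos.2 hL) ?_))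
      rw [mul_one]
      linarith
  unfold rfun
  linarith
end

section
/- For every b with 1 ≤ b ≤ 2, 1 − (1/3)·(2 + (4/b − 1)·e^{b−2} − e^{−b}) ≥ e^{−2}/3, with equality at b = 2. -/
/-!
With `t = 2 - b ∈ [0, 1]`, clearing denominators and multiplying by `e^t` turns the inequality into
`2 + t ≤ (2 - t) e^t (1 + e^{-2} (e^t - 1))`. It follows from `e^t ≥ 1 + t + t²/2 + t³/6`,
`e^t - 1 ≥ t` and `e^{-2} ≥ 1/8`, because
`(2 - t)(1 + t + t²/2 + t³/6)(1 + t/8) ≥ 2 + t` on `[0, 1]` (with equality at both endpoints).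
-/

lemma cubic_le_exp {t : ℝ} (ht : 0 ≤ t) : 1 + t + t ^ 2 / 2 + t ^ 3 / 6 ≤ Real.exp t := by
  have h := Real.sum_le_exp_of_nonneg ht 4
  norm_num [Finset.sum_range_succ, Nat.factorial] at h
  linarith

lemma one_eighth_le_exp_neg_two : 1 / 8 ≤ Real.exp (-2) := by
  have h1 : Real.exp 2 ≤ 8 := by
    have h := Real.exp_one_lt_d9
    have h0 := Real.exp_pos 1
    rw [show (2 : ℝ) = 1 + 1 by norm_num, Real.exp_add]
    nlinarith
  rw [Real.exp_neg, one_div]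
  exact inv_anti₀ (Real.exp_pos 2) h1

lemma two_add_le_poly {t : ℝ} (h0 : 0 ≤ t) (h1 : t ≤ 1) :
    2 + t ≤ (2 - t) * ((1 + t + t ^ 2 / 2 + t ^ 3 / 6) * (1 + t / 8)) := by
  have h2 : t ^ 2 ≤ t := by nlinarith
  have h3 : t ^ 3 ≤ t := by nlinarith
  have h4 : t ^ 4 ≤ t := by nlinarith
  have h : 0 ≤ t * (12 + 6 * t - 8 * t ^ 2 - 9 * t ^ 3 - t ^ 4) :=
    mul_nonneg h0 (by nlinarith)
  linarith

/-- For every `b` with `1 ≤ b ≤ 2`,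
`1 − (1/3)(2 + (4/b − 1)e^{b−2} − e^{−b}) ≥ e^{−2}/3`, with equality at `b = 2`. -/
theorem mixed_slope_ge :
    (∀ b : ℝ, 1 ≤ b → b ≤ 2 →
      Real.exp (-2) / 3 ≤
        1 - (1 / 3) * (2 + (4 / b - 1) * Real.exp (b - 2) - Real.exp (-b))) ∧
    1 - (1 / 3) * (2 + (4 / (2:ℝ) - 1) * Real.exp ((2:ℝ) - 2) - Real.exp (-(2:ℝ)))
      = Real.exp (-2) / 3 := by
  constructor
  · intro b hb1 hb2
    obtain ⟨t, rfl⟩ : ∃ t, b = 2 - t := ⟨2 - b, by ring⟩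
    have ht0 : 0 ≤ t := by linarith
    have ht1 : t ≤ 1 := by linarith
    have hc := one_eighth_le_exp_neg_two
    have hE := cubic_le_exp ht0
    have hE1 : t ≤ Real.exp t - 1 := by linarith [Real.add_one_le_exp t]
    have hpos : 0 < 2 - t := by linarith
    have hEpos := Real.exp_pos t
    have e1 : Real.exp (2 - t - 2) = (Real.exp t)⁻¹ := by
      rw [← Real.exp_neg]; ring_nf
    have e2 : Real.exp (-(2 - t)) = Real.exp (-2) * Real.exp t := by
      rw [← Real.exp_add]; ring_nf
    have hfac : 1 + t / 8 ≤ 1 + Real.exp (-2) * (Real.exp t - 1) := by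
      have := mul_le_mul hc hE1 ht0 (Real.exp_pos _).le
      linarith
    have key : 2 + t ≤
        (2 - t) * (Real.exp t * (1 + Real.exp (-2) * (Real.exp t - 1))) :=
      (two_add_le_poly ht0 ht1).trans
        (mul_le_mul_of_nonneg_left (mul_le_mul hE hfac (by positivity) hEpos.le) hpos.le)
    have key2 : (4 / (2 - t) - 1) * (Real.exp t)⁻¹ ≤
        1 + Real.exp (-2) * (Real.exp t - 1) := by
      have e3 : (4 / (2 - t) - 1) * (Real.exp t)⁻¹ = (2 + t) / ((2 - t) * Real.exp t) := by
        field_simp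
        ring
      rw [e3, div_le_iff₀ (by positivity)]
      linarith
    rw [e1, e2]
    linarith
  · rw [sub_self, Real.exp_zero]
    ring
end

section
/- The sequence (a_n) defined by a_0 = 0 and a_{n+1} = a_n + c_{a_n} diverges to infinity as n → ∞. -/
theorem le_ccoef {x B : ℝ} (hB : 4 ≤ B) (hx : x ≤ B) : Real.exp (-B / 2) / 3 ≤ ccoef x := by
  unfold ccoef
  split_ifs <;> gcongr
  linarith

theorem ccoef_pos (x : ℝ) : 0 < ccoef x := by
  unfold ccoef
  split_ifs <;> positivity

/-- The sequence defined by `a_0 = 0`, `a_{n+1} = a_n + c_{a_n}` diverges to infinity. -/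
theorem seq_tendsto_atTop (a : ℕ → ℝ) (h0 : a 0 = 0)
    (hrec : ∀ n, a (n + 1) = a n + ccoef (a n)) :
    Filter.Tendsto a Filter.atTop Filter.atTop := by
  have hmono : Monotone a := monotone_nat_of_le_succ fun n => by
    rw [hrec]
    linarith [ccoef_pos (a n)]
  refine Filter.tendsto_atTop_atTop_of_monotone hmono fun b => ?_
  by_contra! hb
  -- The bound is enlarged to at least `4` so that `le_ccoef` applies.
  set B := max 4 b
  have hd : 0 < Real.exp (-B / 2) / 3 := by positivity
  have hlin : ∀ n : ℕ, n * (Real.exp (-B / 2) / 3) ≤ a n := by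
    intro n
    induction n with
    | zero => simp [h0]
    | succ n ih =>
      have := le_ccoef (le_max_left 4 b) ((hb n).le.trans (le_max_right 4 b))
      rw [hrec]
      push_cast
      linarith
  obtain ⟨n, hn⟩ := exists_nat_gt (b / (Real.exp (-B / 2) / 3))
  rw [div_lt_iff₀ hd] at hn
  linarith [hlin n, hb n]
end

section
/- Let 1 denote the constant function equal to 1 on [0,1]. For every x ∈ [0,1), the iterates of 𝒜 applied to 1 converge to zero: lim_{n→∞} 𝒜ⁿ1(x) = 0. -/
/-- Nondecreasing functions on `[0,1]` with values in `[0,1]`, the class on which `frogA` is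
order preserving. -/
structure FrogAdm (g : ℝ → ℝ) : Prop where
  mono : MonotoneOn g (Set.Icc 0 1)
  nonneg : ∀ x ∈ Set.Icc (0:ℝ) 1, 0 ≤ g x
  le_one : ∀ x ∈ Set.Icc (0:ℝ) 1, g x ≤ 1

lemma half_mem {x : ℝ} (hx : x ∈ Set.Icc (0:ℝ) 1) : x / 2 ∈ Set.Icc (0:ℝ) 1 :=
  ⟨by linarith [hx.1], by linarith [hx.2]⟩

lemma half_succ_mem {x : ℝ} (hx : x ∈ Set.Icc (0:ℝ) 1) : (x + 1) / 2 ∈ Set.Icc (0:ℝ) 1 :=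
  ⟨by linarith [hx.1], by linarith [hx.2]⟩

/-- The algebraic core of both monotonicity statements: the polynomial defining `frogA` increases
in `u`, `v` and the coefficient parameter `x` on the region `0 ≤ v ≤ u ≤ 1`. -/
lemma frog_poly_mono {x y u v U V : ℝ} (hx : 0 ≤ x) (hxy : x ≤ y) (hv : 0 ≤ v) (hvu : v ≤ u)
    (huU : u ≤ U) (hvV : v ≤ V) (hU : U ≤ 1) :
    (x + 2) / 3 * u ^ 2 + (x + 1) / 3 * v * (1 - u) ≤
      (y + 2) / 3 * U ^ 2 + (y + 1) / 3 * V * (1 - U) := by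
  have h1 : 0 ≤ (y - x) * (u ^ 2 + v * (1 - u)) := by
    have : 0 ≤ v * (1 - u) := mul_nonneg hv (by linarith)
    exact mul_nonneg (by linarith) (by positivity)
  have h2 : 0 ≤ (U - u) * ((y + 2) * (U + u) - (y + 1) * v) := by
    refine mul_nonneg (by linarith) ?_
    nlinarith
  have h3 : 0 ≤ (y + 1) * ((V - v) * (1 - U)) :=
    mul_nonneg (by linarith) (mul_nonneg (by linarith) (by linarith))
  linarith

lemma frogA_le_frogA {g h : ℝ → ℝ} (hg : FrogAdm g)
    (hgh : ∀ x ∈ Set.Icc (0:ℝ) 1, g x ≤ h x) (hh : ∀ x ∈ Set.Icc (0:ℝ) 1, h x ≤ 1)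
    {x : ℝ} (hx : x ∈ Set.Icc (0:ℝ) 1) : frogA g x ≤ frogA h x :=
  frog_poly_mono hx.1 le_rfl (hg.nonneg _ (half_mem hx))
    (hg.mono (half_mem hx) (half_succ_mem hx) (by linarith))
    (hgh _ (half_succ_mem hx)) (hgh _ (half_mem hx)) (hh _ (half_succ_mem hx))

lemma FrogAdm.frogA {g : ℝ → ℝ} (hg : FrogAdm g) : FrogAdm (frogA g) where
  mono x hx y hy hxy :=
    frog_poly_mono hx.1 hxy (hg.nonneg _ (half_mem hx))
      (hg.mono (half_mem hx) (half_succ_mem hx) (by linarith))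
      (hg.mono (half_succ_mem hx) (half_succ_mem hy) (by linarith))
      (hg.mono (half_mem hx) (half_mem hy) (by linarith))
      (hg.le_one _ (half_succ_mem hy))
  nonneg x hx := by
    have hx0 := hx.1
    have h1 := hg.nonneg _ (half_mem hx)
    have h2 : 0 ≤ 1 - g ((x + 1) / 2) := by linarith [hg.le_one _ (half_succ_mem hx)]
    unfold _root_.frogA
    positivity
  le_one x hx := by
    have h := frogA_le_frogA (h := fun _ => 1) hg hg.le_one (fun _ _ => le_rfl) hx
    have h' : _root_.frogA (fun _ => 1) x = (x + 2) / 3 := by simp [_root_.frogA]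
    linarith [hx.2]

/-- Since `t ^ k ≤ t ^ 2` for `k ≥ 2`, the power series of `exp (b * t)` beyond the linear term is at
most `t ^ 2` times that of `exp b`. -/
lemma exp_mul_le {b t : ℝ} (hb : 0 ≤ b) (ht0 : 0 ≤ t) (ht1 : t ≤ 1) :
    Real.exp (b * t) - 1 - b * t ≤ t ^ 2 * (Real.exp b - 1 - b) := by
  have hs (y : ℝ) : HasSum (fun n : ℕ => y ^ n / (n.factorial : ℝ)) (Real.exp y) := by
    rw [Real.exp_eq_exp_ℝ]
    exact NormedSpace.expSeries_div_hasSum_exp y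
  have h := ((hs b).mul_left (t ^ 2)).sub (hs (b * t))
  have h2 := sum_le_hasSum (Finset.range 2) (fun k hk => ?_) h
  · simp [Finset.sum_range_succ] at h2
    linarith
  · have hk2 : 2 ≤ k := by
      simp only [Finset.mem_range, not_lt] at hk
      exact hk
    have h3 : t ^ k ≤ t ^ 2 := pow_le_pow_of_le_one ht0 ht1 hk2
    have h4 : t ^ 2 * (b ^ k / (k.factorial : ℝ)) - (b * t) ^ k / (k.factorial : ℝ)
        = (b ^ k / (k.factorial : ℝ)) * (t ^ 2 - t ^ k) := by rw [mul_pow]; ring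
    rw [h4]
    exact mul_nonneg (by positivity) (by linarith)

lemma exp_key {b t : ℝ} (hb : 0 ≤ b) (ht0 : 0 ≤ t) (ht1 : t ≤ 1) :
    (2 - t) * (Real.exp (b * t) - 1) ≤ t * (Real.exp b - 1 / 2) := by
  have h1 := exp_mul_le hb ht0 ht1
  have h2 := Real.quadratic_le_exp_of_nonneg hb
  have h3 : (2 - t) * (Real.exp (b * t) - 1) ≤
      (2 - t) * (b * t + t ^ 2 * (Real.exp b - 1 - b)) :=
    mul_le_mul_of_nonneg_left (by linarith) (by linarith)
  -- With `s = 1 - t` and `c = exp b - 1 - b ≥ b²/2`, the difference of the two sides is at least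
  -- `t * (1/2 - b * s + c * s²) ≥ t/2 * (1 - b * s)²`.
  have h4 : 0 ≤ t * ((1 - t) ^ 2 * (Real.exp b - 1 - b - b ^ 2 / 2)) :=
    mul_nonneg ht0 (mul_nonneg (sq_nonneg _) (by linarith))
  have h5 : 0 ≤ t * (1 - b * (1 - t)) ^ 2 := by positivity
  nlinarith

/-- Applying `frogA` to the generating function of a Poisson law of mean `2 * b` gains a further
Poisson factor of mean `exp (-b) / 6`. -/
lemma frogA_exp_le {b x : ℝ} (hb : 0 ≤ b) (hx : x ∈ Set.Icc (0:ℝ) 1) :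
    frogA (fun y => Real.exp (-(2 * b * (1 - y)))) x ≤
      Real.exp (-(2 * b * (1 - x))) * Real.exp (-(Real.exp (-b) / 6 * (1 - x))) := by
  have hkey := exp_key (t := 1 - x) hb (by linarith [hx.2]) (by linarith [hx.1])
  have e0 : Real.exp b * Real.exp (-b) = 1 := by rw [← Real.exp_add]; simp
  have e1 : Real.exp (b * (1 - x)) * Real.exp (-(b * (1 - x))) = 1 := by
    rw [← Real.exp_add]; simp
  have e2 : Real.exp (-(2 * b * (1 - x))) = Real.exp (-(b * (1 - x))) ^ 2 := by
    rw [← Real.exp_nat_mul]; congr 1; push_cast; ring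
  have e3 : Real.exp (-(2 * b * (1 - (x + 1) / 2))) = Real.exp (-(b * (1 - x))) := by
    congr 1; ring
  have e4 : Real.exp (-(2 * b * (1 - x / 2))) = Real.exp (-b) * Real.exp (-(b * (1 - x))) := by
    rw [← Real.exp_add]; congr 1; ring
  have hlin : 1 - Real.exp (-b) / 6 * (1 - x) ≤ Real.exp (-(Real.exp (-b) / 6 * (1 - x))) := by
    linarith [Real.add_one_le_exp (-(Real.exp (-b) / 6 * (1 - x)))]
  simp only [frogA]
  rw [e2, e3, e4]
  set p := Real.exp (-(b * (1 - x)))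
  set q := Real.exp (b * (1 - x))
  set E := Real.exp (-b) with hE
  refine le_trans ?_ (mul_le_mul_of_nonneg_left hlin (sq_nonneg p))
  have h1 := mul_le_mul_of_nonneg_left hkey (show 0 ≤ p ^ 2 * E by positivity)
  have h2 : p ^ 2 * E * ((2 - (1 - x)) * (q - 1)) = (1 + x) * E * p * (1 - p) := by
    linear_combination (1 + x) * E * p * e1
  have h3 : p ^ 2 * E * ((1 - x) * (Real.exp b - 1 / 2)) = p ^ 2 * (1 - x) * (1 - E / 2) := by
    linear_combination p ^ 2 * (1 - x) * e0
  rw [h2, h3] at h1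
  linarith

lemma log_step {w : ℝ} (hw : 0 < w) :
    2 * Real.log (w + 1 / 12) ≤ 2 * Real.log w + Real.exp (-Real.log w) / 6 := by
  have h1 : w + 1 / 12 = w * (1 + 1 / (12 * w)) := by field_simp
  have h2 := Real.log_le_sub_one_of_pos (show 0 < 1 + 1 / (12 * w) by positivity)
  have h3 : Real.exp (-Real.log w) = 1 / w := by rw [Real.exp_neg, Real.exp_log hw, one_div]
  have h4 : 1 / (12 * w) = (1 / w) / 12 := by field_simp
  rw [h1, Real.log_mul hw.ne' (by positivity), h3]
  linarith

lemma iterate_adm (n : ℕ) : FrogAdm (frogA^[n] (fun _ => 1)) := by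
  induction n with
  | zero => exact ⟨fun _ _ _ _ _ => le_rfl, fun _ _ => zero_le_one, fun _ _ => le_rfl⟩
  | succ n ih =>
    rw [Function.iterate_succ_apply']
    exact ih.frogA

/-- The quantitative decay `𝒜ⁿ1(x) ≤ (1 + n/12)^(-2(1-x))`. -/
lemma iterate_le (n : ℕ) : ∀ x ∈ Set.Icc (0:ℝ) 1,
    frogA^[n] (fun _ => (1:ℝ)) x ≤ Real.exp (-(2 * Real.log (1 + (n:ℝ) / 12) * (1 - x))) := by
  induction n with
  | zero => intro x _; simp
  | succ n ih =>
    intro x hx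
    have hb : 0 ≤ Real.log (1 + (n:ℝ) / 12) :=
      Real.log_nonneg (le_add_of_nonneg_right (by positivity))
    rw [Function.iterate_succ_apply']
    refine (frogA_le_frogA (iterate_adm n) ih ?_ hx).trans ((frogA_exp_le hb hx).trans ?_)
    · intro y hy
      rw [Real.exp_le_one_iff]
      have := mul_nonneg hb (show 0 ≤ 1 - y by linarith [hy.2])
      linarith
    · rw [← Real.exp_add, Real.exp_le_exp]
      have h1 := log_step (show 0 < 1 + (n:ℝ) / 12 by positivity)
      have h2 : 1 + ((n + 1 : ℕ):ℝ) / 12 = 1 + (n:ℝ) / 12 + 1 / 12 := by push_cast; ring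
      rw [h2]
      have h3 := mul_le_mul_of_nonneg_right h1 (show 0 ≤ 1 - x by linarith [hx.2])
      linarith

/-- For every `x ∈ [0,1)`, the iterates of 𝒜 applied to the constant function 1
converge to zero: `lim_{n→∞} 𝒜ⁿ1(x) = 0`. -/
theorem iterate_tendsto_zero :
    ∀ x ∈ Set.Ico (0:ℝ) 1,
      Filter.Tendsto (fun n : ℕ => frogA^[n] (fun _ => (1:ℝ)) x)
        Filter.atTop (nhds 0) := by
  intro x hx
  have hx' : x ∈ Set.Icc (0:ℝ) 1 := ⟨hx.1, hx.2.le⟩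
  refine squeeze_zero (fun n => (iterate_adm n).nonneg x hx') (fun n => iterate_le n x hx') ?_
  refine Real.tendsto_exp_neg_atTop_nhds_zero.comp ?_
  refine Filter.Tendsto.atTop_mul_const (by linarith [hx.2]) ?_
  refine Filter.Tendsto.const_mul_atTop (by norm_num) (Real.tendsto_log_atTop.comp ?_)
  exact Filter.tendsto_atTop_add_const_left _ _
    (tendsto_natCast_atTop_atTop.atTop_div_const (by norm_num))
end

section
/- Every nondecreasing fixed point of 𝒜 vanishes on [0,1): if f : [0,1] → [0,1] is nondecreasing and satisfies 𝒜f(x) = f(x) for all x ∈ [0,1], then f(x) = 0 for every x ∈ [0,1). -/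
/-- The function `(exp t - 1 - t) / t ^ 2` is nondecreasing for `t ≥ 0`, in division-free form.
The power series of `e ^ 2 * exp t - exp (t * e)` has nonnegative terms from degree two on. -/
lemma exp_remainder_le {t e : ℝ} (ht : 0 ≤ t) (he : 0 ≤ e) (he1 : e ≤ 1) :
    Real.exp (t * e) - 1 - t * e ≤ e ^ 2 * (Real.exp t - 1 - t) := by
  have hs : ∀ y : ℝ, HasSum (fun n : ℕ => y ^ n / (n.factorial : ℝ)) (Real.exp y) := by
    intro y
    rw [Real.exp_eq_exp_ℝ]
    exact NormedSpace.expSeries_div_hasSum_exp y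
  have h := ((hs t).mul_left (e ^ 2)).sub (hs (t * e))
  have h2 := sum_le_hasSum (Finset.range 2) (fun n hn => by
    have hn2 : 2 ≤ n := not_lt.1 (Finset.mem_range.not.1 hn)
    have h1 : e ^ n ≤ e ^ 2 := pow_le_pow_of_le_one he he1 hn2
    have h3 : 0 ≤ (e ^ 2 - e ^ n) * (t ^ n / (n.factorial : ℝ)) :=
      mul_nonneg (by linarith) (by positivity)
    calc (0 : ℝ) ≤ (e ^ 2 - e ^ n) * (t ^ n / (n.factorial : ℝ)) := h3
      _ = _ := by rw [mul_pow]; ring) h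
  simp [Finset.sum_range_succ] at h2
  nlinarith

lemma exp_key_s14 {t e : ℝ} (ht : 0 ≤ t) (he : 0 ≤ e) (he1 : e ≤ 1) :
    (2 - e) * (Real.exp (t * e) - 1) ≤ e * (Real.exp t - 1 / 2) := by
  have h1 := exp_remainder_le ht he he1
  have h2 := Real.quadratic_le_exp_of_nonneg ht
  have h3 : (2 - e) * (Real.exp (t * e) - 1) ≤
      (2 - e) * (t * e + e ^ 2 * (Real.exp t - 1 - t)) :=
    mul_le_mul_of_nonneg_left (by linarith) (by linarith)
  -- With `δ = 1 - e`, the claim becomes `δ t - 1 / 2 ≤ δ ^ 2 (exp t - 1 - t)`, which follows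
  -- from `exp t - 1 - t ≥ t ^ 2 / 2` and `(δ t - 1) ^ 2 ≥ 0`.
  have h4 : (1 - e) * t - 1 / 2 ≤ (1 - e) ^ 2 * (Real.exp t - 1 - t) := by
    have : (1 - e) ^ 2 * (t ^ 2 / 2) ≤ (1 - e) ^ 2 * (Real.exp t - 1 - t) :=
      mul_le_mul_of_nonneg_left (by linarith) (sq_nonneg _)
    nlinarith [sq_nonneg ((1 - e) * t - 1)]
  have h5 := mul_le_mul_of_nonneg_left h4 he
  nlinarith

/-- Monotonicity of the operator, pointwise: `a ≤ b` are the values of the smaller (nondecreasing)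
function at `x / 2` and `(x + 1) / 2`, and `A`, `B` those of the larger function. -/
lemma frog_mono {x a b A B : ℝ} (hx : 0 ≤ x) (ha : 0 ≤ a) (hab : a ≤ b) (hbB : b ≤ B)
    (hB : B ≤ 1) (haA : a ≤ A) :
    ((x + 2) / 3) * b ^ 2 + ((x + 1) / 3) * a * (1 - b) ≤
      ((x + 2) / 3) * B ^ 2 + ((x + 1) / 3) * A * (1 - B) := by
  have h1 : 0 ≤ (x + 1) / 3 * ((A - a) * (1 - B)) :=
    mul_nonneg (by linarith) (mul_nonneg (by linarith) (by linarith))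
  have h2 : 0 ≤ (x + 2) / 3 * (B + b) - (x + 1) / 3 * a := by nlinarith
  have h3 := mul_nonneg (sub_nonneg.2 hbB) h2
  nlinarith

lemma supersolution {x c : ℝ} (hx : 0 ≤ x) (hx1 : x ≤ 1) (hc : 0 ≤ c) :
    frogA (fun y => Real.exp (-(c * (1 - y)))) x ≤
      Real.exp (-((c + Real.exp (-(c / 2)) / 6) * (1 - x))) := by
  obtain ⟨e, rfl⟩ : ∃ e, x = 1 - e := ⟨1 - x, by ring⟩
  obtain ⟨t, rfl⟩ : ∃ t, c = 2 * t := ⟨c / 2, by ring⟩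
  have hk := exp_key_s14 (t := t) (e := e) (by linarith) (by linarith) (by linarith)
  have eB : Real.exp (-(2 * t * (1 - (1 - e + 1) / 2))) = Real.exp (-(t * e)) := by
    congr 1; ring
  have eA : Real.exp (-(2 * t * (1 - (1 - e) / 2))) = Real.exp (-t) * Real.exp (-(t * e)) := by
    rw [← Real.exp_add]; congr 1; ring
  have eR : Real.exp (-((2 * t + Real.exp (-(2 * t / 2)) / 6) * (1 - (1 - e)))) =
      Real.exp (-(t * e)) ^ 2 * Real.exp (-(Real.exp (-t) / 6 * e)) := by
    rw [← Real.exp_nat_mul, ← Real.exp_add]; congr 1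
    rw [show 2 * t / 2 = t by ring]; push_cast; ring
  simp only [frogA]
  rw [eB, eA, eR]
  have hη := Real.add_one_le_exp (-(Real.exp (-t) / 6 * e))
  have hq := Real.exp_pos (-t)
  have hqi : Real.exp (-t) * Real.exp t = 1 := by rw [← Real.exp_add]; simp
  have hBi : Real.exp (-(t * e)) * Real.exp (t * e) = 1 := by rw [← Real.exp_add]; simp
  set q := Real.exp (-t)
  set B := Real.exp (-(t * e))
  have hk2 := mul_le_mul_of_nonneg_left hk hq.le
  have h1 : q * (e * (Real.exp t - 1 / 2)) = e * (1 - q / 2) := by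
    linear_combination e * hqi
  have h2 : 1 - e / 3 + (2 - e) / 3 * q * (Real.exp (t * e) - 1) ≤ Real.exp (-(q / 6 * e)) := by
    linarith
  refine le_trans (le_of_eq ?_) (mul_le_mul_of_nonneg_left h2 (sq_nonneg B))
  linear_combination (-(2 - e) / 3 * q * B) * hBi

/-- Every nondecreasing fixed point of 𝒜 taking values in `[0,1]` vanishes on `[0,1)`. -/
theorem fixed_point_vanishes (f : ℝ → ℝ)
    (hfmono : MonotoneOn f (Set.Icc 0 1))
    (hfmem : ∀ x ∈ Set.Icc (0:ℝ) 1, f x ∈ Set.Icc (0:ℝ) 1)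
    (hfix : ∀ x ∈ Set.Icc (0:ℝ) 1, frogA f x = f x) :
    ∀ x ∈ Set.Ico (0:ℝ) 1, f x = 0 := by
  let S : Set ℝ := {c | 0 ≤ c ∧ ∀ x ∈ Set.Icc (0:ℝ) 1, f x ≤ Real.exp (-(c * (1 - x)))}
  have h0 : (0:ℝ) ∈ S := ⟨le_rfl, fun x hx => by simpa using (hfmem x hx).2⟩
  have hstep : ∀ c ∈ S, c + Real.exp (-(c / 2)) / 6 ∈ S := by
    rintro c ⟨hc, hle⟩
    refine ⟨by positivity, fun x hx => ?_⟩
    have m0 : x / 2 ∈ Set.Icc (0:ℝ) 1 := ⟨by linarith [hx.1], by linarith [hx.2]⟩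
    have m1 : (x + 1) / 2 ∈ Set.Icc (0:ℝ) 1 := ⟨by linarith [hx.1], by linarith [hx.2]⟩
    rw [← hfix x hx]
    refine le_trans ?_ (supersolution hx.1 hx.2 hc)
    refine frog_mono hx.1 (hfmem _ m0).1 (hfmono m0 m1 (by linarith)) (hle _ m1) ?_ (hle _ m0)
    exact Real.exp_le_one_iff.2 (by nlinarith [m1.2, mul_nonneg hc (sub_nonneg.2 m1.2)])
  have hclosed : IsClosed S := by
    have : S = Set.Ici 0 ∩ ⋂ x ∈ Set.Icc (0:ℝ) 1, {c | f x ≤ Real.exp (-(c * (1 - x)))} := by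
      ext c; simp [S]
    rw [this]
    refine isClosed_Ici.inter (isClosed_biInter fun x _ => ?_)
    exact isClosed_le continuous_const (by fun_prop)
  have hunb : ¬ BddAbove S := by
    intro hb
    have h1 := le_csSup hb (hstep _ (hclosed.csSup_mem ⟨0, h0⟩ hb))
    have := Real.exp_pos (-(sSup S / 2))
    linarith
  rintro x ⟨hx0, hx1⟩
  have hx : x ∈ Set.Icc (0:ℝ) 1 := ⟨hx0, hx1.le⟩
  refine le_antisymm (le_of_forall_pos_le_add fun δ hδ => ?_) (hfmem x hx).1
  have hpos : 0 < 1 - x := by linarith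
  -- Beyond this threshold for `c`, the bound `exp (-c (1 - x))` is below `δ`.
  obtain ⟨c, hcS, hc⟩ := not_bddAbove_iff.1 hunb (-Real.log δ / (1 - x))
  rw [div_lt_iff₀ hpos] at hc
  rw [zero_add]
  exact (hcS.2 x hx).trans ((Real.le_log_iff_exp_le hδ).1 (by linarith))
end
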